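/- Let D_0, ..., D_d be the adjacency matrices of an association scheme with d classes on X (d ≥ 2), with intersection numbers p_{ij}^k and structure ideal I, and let σ be a permutation of {0, ..., d} with σ(0) = 0. Then the scheme is P-polynomial with respect to σ if and only if there exist univariate polynomials p, p_2, ..., p_d ∈ ℂ[t] such that p is squarefree of degree d + 1, each p_j has degree j (j = 2, ..., d), and I equals the ideal of ℂ[x_0, ..., x_d] generated by x_0 − 1, p(x_{σ(1)}), and the polynomials x_{σ(j)} − p_j(x_{σ(1)}) for j = 2, ..., d. -/

import Mathlib

/-!
The matrices `D i` are linearly independent (their supports are disjoint and nonempty), and their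
span is closed under multiplication, so it is a commutative algebra `B`, the Bose–Mesner algebra,
with basis `b i = D i`. Evaluation `X i ↦ b i` is a surjection `ℂ[x] → B`, and its kernel is exactly
the structure ideal `I`: modulo `I` every polynomial is a linear combination of the variables
(`exists_sub_linear_mem_structureIdeal`), and a linear combination vanishing in `B` is zero.

If the scheme is P-polynomial with respect to `σ`, then `a = b (σ 1)` generates `B` as an algebra,
so its minimal polynomial `P` has degree `dim B = d + 1`; it is squarefree because a real symmetric
matrix is diagonalizable. The shape ideal `J` lies in the kernel. Conversely, modulo `J` every
polynomial is congruent to some `g (x (σ 1))` (`exists_sub_aeval_mem`), and if it is in the kernel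
then `g a = 0`, so `P ∣ g` and the polynomial is in `J`. Hence `I = J`.

The converse implication only uses that `I` is contained in the kernel: the generator
`x (σ j) - q j (x (σ 1))` vanishes on the adjacency matrices.
-/

open scoped IsMulCommutative

/-! ### The Bose–Mesner algebra -/

/-- The adjacency matrices have pairwise disjoint nonempty supports. -/
lemma adjacency_linearIndependent {X ι : Type*} [Fintype ι] (D : ι → Matrix X X ℂ)
    (h01 : ∀ i x y, D i x y = 0 ∨ D i x y = 1) (hDne : ∀ i, D i ≠ 0)
    (hDsum : (∑ i, D i) = Matrix.of (fun _ _ => (1 : ℂ))) : LinearIndependent ℂ D := by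
  classical
  rw [Fintype.linearIndependent_iff]
  intro c hc i
  obtain ⟨x, y, hxy⟩ : ∃ x y, D i x y ≠ 0 := by
    by_contra! h
    exact hDne i (by ext x y; exact h x y)
  have hi : D i x y = 1 := (h01 i x y).resolve_left hxy
  have hsum : ∑ k, D k x y = 1 := by
    have := congrFun (congrFun hDsum x) y
    simpa [Matrix.sum_apply] using this
  have hrest : ∑ k ∈ Finset.univ.erase i, (D k x y).re = 0 := by
    rw [← Finset.add_sum_erase _ _ (Finset.mem_univ i), hi] at hsum
    rw [← Complex.re_sum]
    simpa using congrArg Complex.re hsum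
  have hnn : ∀ k ∈ Finset.univ.erase i, 0 ≤ (D k x y).re := by
    intro k _
    rcases h01 k x y with h | h <;> simp [h]
  have hzero : ∀ k, k ≠ i → D k x y = 0 := by
    intro k hk
    have := (Finset.sum_eq_zero_iff_of_nonneg hnn).1 hrest k (by simp [hk])
    rcases h01 k x y with h | h
    · exact h
    · simp [h] at this
  have h := congrFun (congrFun hc x) y
  simp only [Matrix.sum_apply, Matrix.smul_apply, smul_eq_mul, Matrix.zero_apply] at h
  rw [Finset.sum_eq_single i (fun k _ hk => by simp [hzero k hk]) (by simp), hi] at h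
  simpa using h

/-- The Bose–Mesner algebra, as a commutative algebra `B` with an embedding into the matrices:
the span of a multiplicatively closed commuting family containing `1`. -/
lemma exists_boseMesner {X ι : Type*} [Fintype X] [DecidableEq X] [Fintype ι]
    (D : ι → Matrix X X ℂ) (i₀ : ι) (hD0 : D i₀ = 1) (p : ι → ι → ι → ℕ)
    (hpsym : ∀ i j k, p i j k = p j i k)
    (hDmul : ∀ i j, D i * D j = ∑ k, (p i j k : ℂ) • D k) :
    ∃ S : Subalgebra ℂ (Matrix X X ℂ), IsMulCommutative S ∧ ∃ b : ι → S,
      (∀ i, S.val (b i) = D i) ∧ Submodule.span ℂ (Set.range b) = ⊤ := by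
  let V := Submodule.span ℂ (Set.range D)
  have hD : ∀ i, D i ∈ V := fun i => Submodule.subset_span ⟨i, rfl⟩
  have hmul : ∀ x y, x ∈ V → y ∈ V → x * y ∈ V ∧ x * y = y * x := by
    intro x y hx hy
    induction hx, hy using Submodule.span_induction₂ with
    | mem_mem x y hx hy =>
      obtain ⟨i, rfl⟩ := hx
      obtain ⟨j, rfl⟩ := hy
      refine ⟨?_, ?_⟩
      · rw [hDmul]
        exact Submodule.sum_mem _ fun k _ => Submodule.smul_mem _ _ (hD k)
      · rw [hDmul, hDmul]
        simp only [hpsym i j]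
    | zero_left y hy => simp
    | zero_right x hx => simp
    | add_left x y z hx hy hz h₁ h₂ =>
      rw [add_mul, mul_add, ← h₁.2, ← h₂.2]; exact ⟨add_mem h₁.1 h₂.1, rfl⟩
    | add_right x y z hx hy hz h₁ h₂ =>
      rw [add_mul, mul_add, ← h₁.2, ← h₂.2]; exact ⟨add_mem h₁.1 h₂.1, rfl⟩
    | smul_left r x y hx hy h =>
      rw [smul_mul_assoc, mul_smul_comm, ← h.2]; exact ⟨Submodule.smul_mem _ _ h.1, rfl⟩
    | smul_right r x y hx hy h =>
      rw [smul_mul_assoc, mul_smul_comm, ← h.2]; exact ⟨Submodule.smul_mem _ _ h.1, rfl⟩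
  let S : Subalgebra ℂ (Matrix X X ℂ) :=
    V.toSubalgebra (hD0 ▸ hD i₀) (fun x y hx hy => (hmul x y hx hy).1)
  refine ⟨S, ⟨⟨fun x y => Subtype.ext (hmul x y x.2 y.2).2⟩⟩, fun i => ⟨D i, hD i⟩,
    fun i => rfl, ?_⟩
  rw [eq_top_iff]
  rintro ⟨x, hx⟩ -
  induction hx using Submodule.span_induction with
  | mem x hx =>
    obtain ⟨i, rfl⟩ := hx
    exact Submodule.subset_span ⟨i, rfl⟩
  | zero => exact zero_mem _
  | add x y hx hy h₁ h₂ => exact add_mem h₁ h₂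
  | smul r x hx h => exact Submodule.smul_mem _ r h

/-- The minimal polynomial of a Hermitian matrix is squarefree. -/
lemma squarefree_minpoly_of_isHermitian {X : Type*} [Fintype X] [DecidableEq X]
    (A : Matrix X X ℂ) (hA : A.IsHermitian) : Squarefree (minpoly ℂ A) := by
  have h := (Matrix.isSymmetric_toEuclideanLin_iff.mpr hA).isFinitelySemisimple
  rw [Module.End.isFinitelySemisimple_iff_isSemisimple] at h
  have h2 := h.minpoly_squarefree
  have h3 : minpoly ℂ (Matrix.toLpLinAlgEquiv (R := ℂ) 2 A) = minpoly ℂ A :=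
    minpoly.algEquiv_eq _ _
  rw [← h3]
  exact h2

/-! ### Normal forms modulo the two ideals, and the degree of the minimal polynomial -/

open MvPolynomial in
/-- Modulo the structure relations every polynomial is a linear form: the relations reduce products
of variables, and constants are multiples of `X i₀`. -/
lemma exists_sub_linear_mem_structureIdeal {ι : Type*} [Fintype ι] (i₀ : ι) (p : ι → ι → ι → ℕ)
    (I : Ideal (MvPolynomial ι ℂ)) (h0 : X i₀ - 1 ∈ I)
    (hmul : ∀ i j, X i * X j - ∑ k, (p i j k : ℂ) • X k ∈ I) (f : MvPolynomial ι ℂ) :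
    ∃ c : ι → ℂ, f - ∑ k, c k • X k ∈ I := by
  classical
  induction f using MvPolynomial.induction_on with
  | C a =>
    refine ⟨Pi.single i₀ a, ?_⟩
    rw [Finset.sum_eq_single i₀ (fun k _ hk => by simp [hk]) (by simp)]
    convert I.mul_mem_left (-C a) h0 using 1
    simp only [Pi.single_eq_same, smul_eq_C_mul]
    ring
  | add f g hf hg =>
    obtain ⟨c, hc⟩ := hf
    obtain ⟨e, he⟩ := hg
    refine ⟨c + e, ?_⟩
    convert I.add_mem hc he using 1
    simp only [Pi.add_apply, add_smul, Finset.sum_add_distrib]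
    ring
  | mul_X f i hf =>
    obtain ⟨c, hc⟩ := hf
    refine ⟨fun l => ∑ k, c k * p k i l, ?_⟩
    have h1 := I.mul_mem_right (X i) hc
    have h2 : ∑ k, C (c k) * (X k * X i - ∑ l, (p k i l : ℂ) • X l) ∈ I :=
      I.sum_mem fun k _ => I.mul_mem_left _ (hmul k i)
    convert I.add_mem h1 h2 using 1
    simp only [mul_sub, Finset.sum_sub_distrib, sub_mul, Finset.sum_mul, Finset.sum_smul,
      Finset.mul_sum, smul_eq_C_mul, C_mul]
    rw [Finset.sum_comm]
    simp only [mul_assoc]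
    ring

open MvPolynomial in
/-- Modulo an ideal making every variable a polynomial in `X r`, every multivariate polynomial is
a polynomial in `X r`. -/
lemma exists_sub_aeval_mem {ι : Type*} (r : ι) (J : Ideal (MvPolynomial ι ℂ))
    (hJ : ∀ i, ∃ g : Polynomial ℂ, X i - Polynomial.aeval (X r) g ∈ J) (f : MvPolynomial ι ℂ) :
    ∃ g : Polynomial ℂ, f - Polynomial.aeval (X r) g ∈ J := by
  induction f using MvPolynomial.induction_on with
  | C a => exact ⟨Polynomial.C a, by simp [MvPolynomial.algebraMap_eq]⟩
  | add f g hf hg =>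
    obtain ⟨c, hc⟩ := hf
    obtain ⟨e, he⟩ := hg
    refine ⟨c + e, ?_⟩
    convert J.add_mem hc he using 1
    rw [map_add]
    ring
  | mul_X f i hf =>
    obtain ⟨c, hc⟩ := hf
    obtain ⟨e, he⟩ := hJ i
    refine ⟨c * e, ?_⟩
    convert J.add_mem (J.mul_mem_right (X i) hc)
      (J.mul_mem_left (Polynomial.aeval (X r) c) he) using 1
    rw [map_mul]
    ring

/-- The minimal polynomial of a generator of a finite-dimensional algebra has degree the dimension,
the dimension being computed from a basis indexed by `ι`. -/
lemma natDegree_minpoly_of_generates {B ι : Type*} [CommRing B] [Algebra ℂ B] [Fintype ι]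
    (b : ι → B) (hli : LinearIndependent ℂ b) (hspan : Submodule.span ℂ (Set.range b) = ⊤)
    (a : B) (ha : ∀ i, b i ∈ Algebra.adjoin ℂ {a}) :
    IsIntegral ℂ a ∧ (minpoly ℂ a).natDegree = Fintype.card ι := by
  let bb := Module.Basis.mk hli hspan.ge
  have : Module.Finite ℂ B := Module.Finite.of_basis bb
  have hint : IsIntegral ℂ a := IsIntegral.of_finite ℂ a
  have htop : Algebra.adjoin ℂ {a} = ⊤ := by
    rw [eq_top_iff, ← Subalgebra.toSubmodule.le_iff_le, Algebra.top_toSubmodule, ← hspan,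
      Submodule.span_le]
    rintro _ ⟨i, rfl⟩
    exact ha i
  refine ⟨hint, ?_⟩
  rw [← PowerBasis.ofAdjoinEqTop_dim hint htop, ← PowerBasis.finrank,
    Module.finrank_eq_card_basis bb]


/-! ### The equivalence -/

/-- A scheme is P-polynomial w.r.t. a reordering `σ` (with `σ 0 = 0`) iff its
structure ideal is generated by `x 0 - 1`, a squarefree polynomial `P(x (σ 1))`
of degree `d + 1`, and polynomials `x (σ j) - q j (x (σ 1))` with `deg (q j) = j`
for `j = 2, …, d`. -/
theorem assocScheme_pPolynomial_iff_groebner_shape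
    {X : Type*} [Fintype X] [Nonempty X] [DecidableEq X]
    {d : ℕ} (hd : 2 ≤ d)
    (D : Fin (d + 1) → Matrix X X ℂ)
    (p : Fin (d + 1) → Fin (d + 1) → Fin (d + 1) → ℕ)
    (h01 : ∀ i x y, D i x y = 0 ∨ D i x y = 1)
    (hDne : ∀ i, D i ≠ 0)
    (hD0 : D 0 = 1)
    (hDsum : (∑ i, D i) = Matrix.of (fun _ _ => (1 : ℂ)))
    (hDsym : ∀ i, (D i).IsSymm)
    (hpsym : ∀ i j k, p i j k = p j i k)
    (hDmul : ∀ i j, D i * D j = ∑ k, (p i j k : ℂ) • D k)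
    (I : Ideal (MvPolynomial (Fin (d + 1)) ℂ))
    (hI : I = Ideal.span
      ({MvPolynomial.X 0 - 1} ∪
       {f : MvPolynomial (Fin (d + 1)) ℂ | ∃ i j : Fin (d + 1), i ≤ j ∧
          f = MvPolynomial.X i * MvPolynomial.X j -
            ∑ k, (p i j k : ℂ) • MvPolynomial.X k}))
    (σ : Equiv.Perm (Fin (d + 1))) (hσ : σ 0 = 0) :
    (∀ j : Fin (d + 1), 2 ≤ (j : ℕ) →
        ∃ q : Polynomial ℂ, q.natDegree = (j : ℕ) ∧
          D (σ j) = Polynomial.aeval (D (σ 1)) q) ↔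
      ∃ P : Polynomial ℂ, ∃ q : Fin (d + 1) → Polynomial ℂ,
        Squarefree P ∧ P.natDegree = d + 1 ∧
        (∀ j : Fin (d + 1), 2 ≤ (j : ℕ) → (q j).natDegree = (j : ℕ)) ∧
        I = Ideal.span
          ({MvPolynomial.X 0 - 1,
            Polynomial.aeval (MvPolynomial.X (σ 1) : MvPolynomial (Fin (d + 1)) ℂ) P} ∪
           {f : MvPolynomial (Fin (d + 1)) ℂ | ∃ j : Fin (d + 1), 2 ≤ (j : ℕ) ∧
              f = MvPolynomial.X (σ j) -
                Polynomial.aeval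
                  (MvPolynomial.X (σ 1) : MvPolynomial (Fin (d + 1)) ℂ) (q j)}) := by

  classical
  obtain ⟨S, hS, b, hb, hspan⟩ := exists_boseMesner D 0 hD0 p hpsym hDmul
  have hinj : Function.Injective S.val := Subtype.val_injective
  have hli : LinearIndependent ℂ b := by
    refine LinearIndependent.of_comp S.val.toLinearMap ?_
    have : (S.val.toLinearMap ∘ b) = D := funext hb
    rw [this]
    exact adjacency_linearIndependent D h01 hDne hDsum
  have hb0 : b 0 = 1 := hinj (by rw [hb, hD0, map_one])
  have hbmul : ∀ i j, b i * b j = ∑ k, (p i j k : ℂ) • b k := fun i j =>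
    hinj (by rw [map_mul, hb, hb, hDmul, map_sum]; simp only [map_smul, hb])
  have h0I : MvPolynomial.X 0 - 1 ∈ I := hI ▸ Ideal.subset_span (Or.inl rfl)
  have hmulI : ∀ i j : Fin (d + 1), (MvPolynomial.X i * MvPolynomial.X j -
      ∑ k, (p i j k : ℂ) • MvPolynomial.X k : MvPolynomial (Fin (d + 1)) ℂ) ∈ I := by
    intro i j
    rcases le_total i j with h | h
    · exact hI ▸ Ideal.subset_span (Or.inr ⟨i, j, h, rfl⟩)
    · rw [mul_comm]
      simp only [hpsym i j]
      exact hI ▸ Ideal.subset_span (Or.inr ⟨j, i, h, rfl⟩)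
  let φ : MvPolynomial (Fin (d + 1)) ℂ →ₐ[ℂ] S := MvPolynomial.aeval b
  have hφX : ∀ i, φ (MvPolynomial.X i) = b i := fun i => MvPolynomial.aeval_X b i
  have hφr : ∀ (i) (g : Polynomial ℂ),
      φ (Polynomial.aeval (MvPolynomial.X i) g) = Polynomial.aeval (b i) g := by
    intro i g
    rw [← Polynomial.aeval_algHom_apply, hφX]
  have hker : ∀ f, f ∈ I ↔ φ f = 0 := by
    have hle : I ≤ RingHom.ker φ := by
      rw [hI, Ideal.span_le]
      rintro f (rfl | ⟨i, j, _, rfl⟩)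
      · simp [hφX, hb0]
      · simp [hφX, hbmul]
    refine fun f => ⟨fun h => hle h, fun h => ?_⟩
    obtain ⟨c, hc⟩ := exists_sub_linear_mem_structureIdeal 0 p I h0I hmulI f
    have h1 : φ (f - ∑ k, c k • MvPolynomial.X k) = 0 := hle hc
    rw [map_sub, h, zero_sub, neg_eq_zero, map_sum] at h1
    simp only [map_smul, hφX] at h1
    have hc0 := Fintype.linearIndependent_iff.1 hli c h1
    simpa [hc0] using hc
  have hDb : ∀ (i j) (q : Polynomial ℂ),
      D i = Polynomial.aeval (D j) q ↔ b i = Polynomial.aeval (b j) q := by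
    intro i j q
    rw [← hb i, ← hb j, Polynomial.aeval_algHom_apply]
    exact hinj.eq_iff
  constructor
  · intro h
    choose! q hqdeg hq using h
    have hq' : ∀ j : Fin (d + 1), 2 ≤ (j : ℕ) → b (σ j) = Polynomial.aeval (b (σ 1)) (q j) :=
      fun j hj => (hDb _ _ _).1 (hq j hj)
    -- an index below `2` is `0` or `1`, where `b (σ j)` is `1` or the generator itself
    have hcases : ∀ j : Fin (d + 1), j = 0 ∨ j = 1 ∨ 2 ≤ (j : ℕ) := by
      intro j
      have h1 : ((1 : Fin (d + 1)) : ℕ) = 1 := by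
        rw [Fin.val_one', Nat.mod_eq_of_lt (by omega)]
      rcases Nat.lt_or_ge (j : ℕ) 2 with h | h
      · rcases Nat.lt_or_ge (j : ℕ) 1 with h' | h'
        · exact Or.inl (Fin.ext (by rw [Fin.val_zero]; omega))
        · exact Or.inr (Or.inl (Fin.ext (by omega)))
      · exact Or.inr (Or.inr h)
    have hgen : ∀ i, b i ∈ Algebra.adjoin ℂ {b (σ 1)} := by
      intro i
      obtain ⟨j, rfl⟩ := σ.surjective i
      rcases hcases j with rfl | rfl | hj
      · rw [hσ, hb0]; exact one_mem _
      · exact Algebra.subset_adjoin rfl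
      · rw [hq' j hj]; exact Polynomial.aeval_mem_adjoin_singleton _ _
    obtain ⟨hint, hdeg⟩ := natDegree_minpoly_of_generates b hli hspan (b (σ 1)) hgen
    refine ⟨minpoly ℂ (b (σ 1)), q, ?_, by simpa using hdeg, hqdeg, ?_⟩
    · rw [← minpoly.algHom_eq S.val hinj, hb]
      refine squarefree_minpoly_of_isHermitian _ (Matrix.IsHermitian.ext fun x y => ?_)
      rw [(hDsym (σ 1)).apply]
      rcases h01 (σ 1) x y with h | h <;> simp [h]
    · apply le_antisymm
      · intro f hf
        rw [hker] at hf
        set J : Ideal (MvPolynomial (Fin (d + 1)) ℂ) := Ideal.span _ with hJ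
        have hJ0 : MvPolynomial.X 0 - 1 ∈ J := Ideal.subset_span (by simp)
        have hJP : Polynomial.aeval (MvPolynomial.X (σ 1)) (minpoly ℂ (b (σ 1))) ∈ J :=
          Ideal.subset_span (by simp)
        have hJq : ∀ j : Fin (d + 1), 2 ≤ (j : ℕ) → MvPolynomial.X (σ j) -
            Polynomial.aeval (MvPolynomial.X (σ 1)) (q j) ∈ J :=
          fun j hj => Ideal.subset_span (Or.inr ⟨j, hj, rfl⟩)
        have hle : J ≤ RingHom.ker φ := by
          rw [hJ, Ideal.span_le]
          rintro f ((rfl | rfl) | ⟨j, hj, rfl⟩)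
          · simp [hφX, hb0]
          · simp [hφr]
          · simp [hφX, hφr, hq' j hj]
        obtain ⟨g, hg⟩ := exists_sub_aeval_mem (σ 1) J (fun i => by
          obtain ⟨j, rfl⟩ := σ.surjective i
          rcases hcases j with rfl | rfl | hj
          · exact ⟨1, by simpa [hσ] using hJ0⟩
          · exact ⟨Polynomial.X, by simp⟩
          · exact ⟨q j, hJq j hj⟩) f
        have h1 : φ (f - Polynomial.aeval (MvPolynomial.X (σ 1)) g) = 0 := hle hg
        rw [map_sub, hf, zero_sub, neg_eq_zero, hφr] at h1
        obtain ⟨e, rfl⟩ := minpoly.dvd ℂ _ h1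
        rw [map_mul] at hg
        exact (Submodule.sub_mem_iff_left J (J.mul_mem_right _ hJP)).1 hg
      · rw [Ideal.span_le]
        rintro f ((rfl | rfl) | ⟨j, hj, rfl⟩)
        · exact h0I
        · rw [SetLike.mem_coe, hker, hφr, minpoly.aeval]
        · rw [SetLike.mem_coe, hker, map_sub, hφX, hφr, hq' j hj, sub_self]
  · rintro ⟨P, q, -, -, hqdeg, hIJ⟩ j hj
    refine ⟨q j, hqdeg j hj, ?_⟩
    have hmem : MvPolynomial.X (σ j) -
        Polynomial.aeval (MvPolynomial.X (σ 1)) (q j) ∈ I := by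
      rw [hIJ]
      exact Ideal.subset_span (Or.inr ⟨j, hj, rfl⟩)
    rw [hker, map_sub, hφX, hφr, sub_eq_zero] at hmem
    exact (hDb _ _ _).2 hmem
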